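/- Let u be quasi-definite with SMOP (P_n) and recurrence coefficients (a_n, b_n), assume b_1 + b_0 ≠ 0 and W(P_n, P_{n−1})(0) ≠ 0 for all n ≥ 2, and let (P^−_n) be the SMOP of the inverse functional u^{-1}. Then x P^−_n = P^−_{n+1} + b^−_n P^−_n + a^−_n P^−_{n−1} (P^−_{−1} = 0, P^−_0 = 1), where b^−_0 = −b_0, b^−_n = b_{n+1} − W(P_{n+1},P_{n−1})(0)/W(P_n,P_{n−1})(0) + W(P_{n+2},P_n)(0)/W(P_{n+1},P_n)(0) for n ≥ 1, a^−_1 = −(b_0² + a_1), and a^−_n = a_{n−1}·W(P_{n+1},P_n)(0)·W(P_{n−1},P_{n−2})(0)/W(P_n,P_{n−1})(0)² for n ≥ 2. -/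

import Mathlib

open Polynomial

noncomputable section

/-- Apply a linear functional (identified with its moment sequence) to a polynomial:
`⟨u, p⟩ = Σ_k c_k u_k` for `p = Σ_k c_k x^k`. -/
def fapply (u : ℕ → ℂ) (p : Polynomial ℂ) : ℂ := p.sum fun k ck => ck * u k

/-- `P` is the sequence of monic orthogonal polynomials (SMOP) of the functional `u`. -/
def IsSMOP (u : ℕ → ℂ) (P : ℕ → Polynomial ℂ) : Prop :=
  (∀ n, (P n).Monic) ∧ (∀ n, (P n).natDegree = n) ∧
    (∀ n m, n ≠ m → fapply u (P n * P m) = 0) ∧ (∀ n, fapply u (P n * P n) ≠ 0)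

/-- A functional is quasi-definite iff it admits a SMOP. -/
def IsQuasiDefinite (u : ℕ → ℂ) : Prop := ∃ P, IsSMOP u P

/-- Three term recurrence relation `x P_n = P_{n+1} + b_n P_n + a_n P_{n-1}`,
with `P_{-1} = 0`, `P_0 = 1`. -/
def HasTTRR (P : ℕ → Polynomial ℂ) (a b : ℕ → ℂ) : Prop :=
  P 0 = 1 ∧ X * P 0 = P 1 + C (b 0) * P 0 ∧
    ∀ n, 1 ≤ n → X * P n = P (n + 1) + C (b n) * P n + C (a n) * P (n - 1)

/-- Wronskian `W(p,q)(x) = p(x) q'(x) - p'(x) q(x)`. -/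
def Wr (p q : Polynomial ℂ) (x : ℂ) : ℂ :=
  p.eval x * (derivative q).eval x - (derivative p).eval x * q.eval x

/-- The monic Jacobi matrix with diagonal `b`, superdiagonal `1` and subdiagonal
entries `J_{n+1,n} = a_{n+1}`. -/
def jacobi (a b : ℕ → ℂ) (i j : ℕ) : ℂ :=
  if i = j then b i else if j = i + 1 then 1 else if i = j + 1 then a i else 0

/-- Entrywise product of semi-infinite (banded) matrices; the sum has finite support. -/
def mprod (A B : ℕ → ℕ → ℂ) (i j : ℕ) : ℂ := ∑' k, A i k * B k j

/-- `w` is the moment sequence of the inverse functional `u⁻¹`: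
the convolution of the moments of `u` and `w` is `(1,0,0,…)`. -/
def IsInverseMoments (u w : ℕ → ℂ) : Prop :=
  ∀ n, ∑ k ∈ Finset.range (n + 1), u k * w (n - k) = if n = 0 then 1 else 0

/-- Apply a functional `u` to the second (outer) variable `y` of a bivariate polynomial
`D = Σ_k q_k(x) y^k`, giving `Σ_k u_k q_k(x)`. -/
def fapplyY (u : ℕ → ℂ) (D : Polynomial (Polynomial ℂ)) : Polynomial ℂ :=
  D.sum fun k q => u k • q

/-!
The divided difference `p ↦ ⟨u_y, (p(x) - p(y)) / (x - y)⟩` turns `X * p` into `X` times the image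
of `p` plus the constant `⟨u, p⟩`, and `u⁻¹` applied to the image of `p` returns the coefficient
of `X` in `p`. The monic combination `q_n` of `P_{n+2}, P_{n+1}, P_n` with a double zero at the
origin (`q_n / X²` is orthogonal with respect to `x² u`) satisfies a three term recurrence, whose
coefficients are forced by `W(P_{n+1}, P_n)(0) ≠ 0`: a combination of `P_{n+1}` and `P_n` with a
double zero at the origin vanishes. Hence the images of the `q_n`, divided by `u_0` and preceded by
`1`, satisfy the claimed recurrence and are annihilated by `u⁻¹` except for the first, which by
Favard's argument makes them the monic orthogonal polynomials of `u⁻¹`.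
-/

section MomentFunctional

variable {R : Type*} [CommSemiring R]

/-- The linear functional `⟨u, ·⟩` on polynomials with moment sequence `u`; over `ℂ` it is the
linear-map form of `fapply u`. -/
def momentFunctional (u : ℕ → R) : R[X] →ₗ[R] R :=
  lsum fun k => LinearMap.mulRight R (u k)

lemma fapply_eq_momentFunctional (u : ℕ → ℂ) (p : ℂ[X]) : fapply u p = momentFunctional u p :=
  rfl

lemma momentFunctional_X_pow (u : ℕ → R) (k : ℕ) : momentFunctional u (X ^ k) = u k := by
  simp [momentFunctional, lsum, X_pow_eq_monomial, sum_monomial_index]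

lemma momentFunctional_one (u : ℕ → R) : momentFunctional u 1 = u 0 := by
  simpa using momentFunctional_X_pow u 0

lemma momentFunctional_C_mul (u : ℕ → R) (c : R) (p : R[X]) :
    momentFunctional u (C c * p) = c * momentFunctional u p := by
  rw [← smul_eq_C_mul, map_smul, smul_eq_mul]

lemma momentFunctional_mul_of_natDegree_le {u : ℕ → R} {p q : R[X]} {n : ℕ}
    (hq : ∀ i < n, momentFunctional u (X ^ i * q) = 0) (hp : p.natDegree ≤ n) :
    momentFunctional u (p * q) = p.coeff n * momentFunctional u (X ^ n * q) := by
  conv_lhs => rw [p.as_sum_range_C_mul_X_pow' (Nat.lt_succ_of_le hp)]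
  simp only [Finset.sum_mul, map_sum, mul_assoc, momentFunctional_C_mul]
  rw [Finset.sum_range_succ, Finset.sum_eq_zero, zero_add]
  intro i hi
  rw [hq i (Finset.mem_range.1 hi), mul_zero]

/-- The divided difference `p ↦ ⟨u_y, (p(x) - p(y)) / (x - y)⟩`, defined through its values on
the monomials. It maps orthogonal polynomials to the associated polynomials of the first kind. -/
def associatedPoly (u : ℕ → R) : R[X] →ₗ[R] R[X] :=
  lsum fun k => LinearMap.toSpanSingleton R R[X]
    (∑ i ∈ Finset.range k, C (u i) * X ^ (k - 1 - i))

lemma associatedPoly_X_pow (u : ℕ → R) (k : ℕ) :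
    associatedPoly u (X ^ k) = ∑ i ∈ Finset.range k, C (u i) * X ^ (k - 1 - i) := by
  simp [associatedPoly, lsum, X_pow_eq_monomial, sum_monomial_index]

lemma associatedPoly_C_mul (u : ℕ → R) (c : R) (p : R[X]) :
    associatedPoly u (C c * p) = C c * associatedPoly u p := by
  rw [← smul_eq_C_mul, map_smul, smul_eq_C_mul]

lemma associatedPoly_X_pow_succ (u : ℕ → R) (n : ℕ) :
    associatedPoly u (X ^ (n + 1)) = X * associatedPoly u (X ^ n) + C (u n) := by
  have shift : ∀ i ∈ Finset.range n, C (u i) * X ^ (n - i) = X * (C (u i) * X ^ (n - 1 - i)) := by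
    intro i hi
    have : n - i = n - 1 - i + 1 := by grind
    rw [this, pow_succ]
    ring
  simp [associatedPoly_X_pow, Finset.sum_range_succ, Finset.mul_sum, Finset.sum_congr rfl shift]

lemma associatedPoly_X_mul (u : ℕ → R) (p : R[X]) :
    associatedPoly u (X * p) = X * associatedPoly u p + C (momentFunctional u p) := by
  induction p using Polynomial.induction_on' with
  | add p q hp hq =>
    simp only [mul_add, map_add, hp, hq]
    ring
  | monomial n c =>
    rw [← C_mul_X_pow_eq_monomial, mul_left_comm, ← pow_succ', associatedPoly_C_mul,
      associatedPoly_C_mul, momentFunctional_C_mul, associatedPoly_X_pow_succ,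
      momentFunctional_X_pow, C_mul]
    ring

end MomentFunctional

lemma momentFunctional_associatedPoly {u v : ℕ → ℂ} (h : IsInverseMoments u v) (p : ℂ[X]) :
    momentFunctional v (associatedPoly u p) = p.coeff 1 := by
  induction p using Polynomial.induction_on' with
  | add p q hp hq => rw [map_add, map_add, hp, hq, coeff_add]
  | monomial n c =>
    rw [← C_mul_X_pow_eq_monomial, associatedPoly_C_mul, momentFunctional_C_mul, coeff_C_mul,
      associatedPoly_X_pow, coeff_X_pow, map_sum]
    simp only [momentFunctional_C_mul, momentFunctional_X_pow]
    cases n with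
    | zero => simp
    | succ n => simpa [eq_comm] using congrArg (c * ·) (h n)

lemma IsInverseMoments.moment_zero_mul {u v : ℕ → ℂ} (h : IsInverseMoments u v) :
    u 0 * v 0 = 1 := by
  simpa using h 0

namespace IsSMOP

variable {u : ℕ → ℂ} {P Q : ℕ → ℂ[X]}

lemma isMonicOfDegree (hP : IsSMOP u P) (n : ℕ) : IsMonicOfDegree (P n) n :=
  ⟨hP.2.1 n, hP.1 n⟩

lemma zero_eq_one (hP : IsSMOP u P) : P 0 = 1 :=
  isMonicOfDegree_zero_iff.1 (hP.isMonicOfDegree 0)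

lemma momentFunctional_mul_self_ne_zero (hP : IsSMOP u P) (n : ℕ) :
    momentFunctional u (P n * P n) ≠ 0 :=
  hP.2.2.2 n

lemma momentFunctional_mul (hP : IsSMOP u P) {f : ℂ[X]} {n : ℕ} (hf : f.natDegree ≤ n) :
    momentFunctional u (f * P n) = f.coeff n * momentFunctional u (P n * P n) := by
  have hmonic := hP.isMonicOfDegree
  let S : Polynomial.Sequence ℂ :=
    ⟨P, fun i => by rw [degree_eq_natDegree (hmonic i).ne_zero, (hmonic i).natDegree_eq]⟩
  have hspan : f ∈ Submodule.span ℂ (S '' Set.Iic n) := by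
    rw [S.span_degreeLE fun i _ => by simp [S, (hmonic i).leadingCoeff_eq], mem_degreeLE]
    exact degree_le_of_natDegree_le hf
  let pairing : ℂ[X] →ₗ[ℂ] ℂ := momentFunctional u ∘ₗ LinearMap.mulRight ℂ (P n)
  let topCoeff : ℂ[X] →ₗ[ℂ] ℂ :=
    LinearMap.mulRight ℂ (momentFunctional u (P n * P n)) ∘ₗ lcoeff ℂ n
  refine LinearMap.eqOn_span (f := pairing) (g := topCoeff) ?_ hspan
  rintro _ ⟨i, hi, rfl⟩
  change momentFunctional u (P i * P n) = (P i).coeff n * momentFunctional u (P n * P n)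
  rcases (Set.mem_Iic.1 hi).eq_or_lt with rfl | hlt
  · rw [((isMonicOfDegree_iff _ _).1 (hmonic i)).2, one_mul]
  · rw [coeff_eq_zero_of_natDegree_lt ((hmonic i).natDegree_eq.trans_lt hlt), zero_mul]
    exact hP.2.2.1 i n hlt.ne

lemma momentFunctional_mul_eq_zero (hP : IsSMOP u P) {f : ℂ[X]} {n : ℕ} (hf : f.natDegree < n) :
    momentFunctional u (f * P n) = 0 := by
  rw [hP.momentFunctional_mul hf.le, coeff_eq_zero_of_natDegree_lt hf, zero_mul]

lemma momentFunctional_succ (hP : IsSMOP u P) (n : ℕ) : momentFunctional u (P (n + 1)) = 0 := by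
  simpa using hP.momentFunctional_mul_eq_zero (f := 1) (n := n + 1) (by simp)

lemma momentFunctional_X_pow_mul_ne_zero (hP : IsSMOP u P) (n : ℕ) :
    momentFunctional u (X ^ n * P n) ≠ 0 := by
  rw [hP.momentFunctional_mul (natDegree_X_pow_le n), coeff_X_pow_self, one_mul]
  exact hP.momentFunctional_mul_self_ne_zero n

theorem unique (hP : IsSMOP u P) (hQ : IsSMOP u Q) : P = Q := by
  funext n
  by_contra hne
  set f := P n - Q n with hf
  have hf0 : f ≠ 0 := sub_ne_zero.2 hne
  have hdeg : f.natDegree < n := by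
    refine (hP.isMonicOfDegree n).natDegree_sub_lt ?_ (hQ.isMonicOfDegree n)
    rintro rfl
    exact hne (hP.zero_eq_one.trans hQ.zero_eq_one.symm)
  have hPdeg : (P f.natDegree).natDegree < n :=
    (hP.isMonicOfDegree _).natDegree_eq.trans_lt hdeg
  have horth : momentFunctional u (f * P f.natDegree) = 0 := by
    rw [mul_comm, hf, mul_sub, map_sub, ← hf, hP.momentFunctional_mul_eq_zero hPdeg,
      hQ.momentFunctional_mul_eq_zero hPdeg, sub_zero]
  rw [hP.momentFunctional_mul le_rfl, coeff_natDegree] at horth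
  exact mul_ne_zero (leadingCoeff_ne_zero.2 hf0) (hP.momentFunctional_mul_self_ne_zero _) horth

end IsSMOP

namespace HasTTRR

variable {P : ℕ → ℂ[X]} {a b : ℕ → ℂ}

lemma apply_one (h : HasTTRR P a b) : P 1 = X - C (b 0) := by
  have h1 := h.2.1
  rw [h.1] at h1
  linear_combination -h1

lemma apply_add_two (h : HasTTRR P a b) (n : ℕ) :
    P (n + 2) = (X - C (b (n + 1))) * P (n + 1) - C (a (n + 1)) * P n := by
  have hn := h.2.2 (n + 1) n.succ_pos
  rw [add_tsub_cancel_right] at hn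
  linear_combination -hn

lemma isMonicOfDegree (h : HasTTRR P a b) (n : ℕ) : IsMonicOfDegree (P n) n := by
  induction n using Nat.twoStepInduction with
  | zero => exact isMonicOfDegree_zero_iff.2 h.1
  | one => simpa only [h.apply_one] using isMonicOfDegree_X_sub_one (b 0)
  | more n ih0 ih1 =>
    have hlead : IsMonicOfDegree ((X - C (b (n + 1))) * P (n + 1)) (n + 2) := by
      simpa only [add_comm 1] using (isMonicOfDegree_X_sub_one (b (n + 1))).mul ih1
    have hlow : (C (a (n + 1)) * P n).natDegree < n + 2 := by
      have := natDegree_C_mul_le (a (n + 1)) (P n)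
      rw [ih0.natDegree_eq] at this
      lia
    rw [h.apply_add_two]
    exact hlead.sub hlow

section Favard

variable {v : ℕ → ℂ}

lemma momentFunctional_X_pow_succ_mul (h : HasTTRR P a b) (i n : ℕ) :
    momentFunctional v (X ^ (i + 1) * P (n + 1)) = momentFunctional v (X ^ i * P (n + 2)) +
      b (n + 1) * momentFunctional v (X ^ i * P (n + 1)) +
      a (n + 1) * momentFunctional v (X ^ i * P n) := by
  rw [← momentFunctional_C_mul, ← momentFunctional_C_mul, ← map_add, ← map_add, h.apply_add_two]
  ring_nf

lemma momentFunctional_X_pow_mul_eq_zero (h : HasTTRR P a b)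
    (hv : ∀ n, momentFunctional v (P (n + 1)) = 0) {i n : ℕ} (hi : i < n) :
    momentFunctional v (X ^ i * P n) = 0 := by
  induction i generalizing n with
  | zero =>
    obtain ⟨m, rfl⟩ := Nat.exists_eq_add_of_lt hi
    simpa using hv m
  | succ i ih =>
    obtain ⟨m, rfl⟩ : ∃ m, n = m + 1 := ⟨n - 1, by lia⟩
    rw [h.momentFunctional_X_pow_succ_mul, ih (by lia), ih (by lia), ih (by lia)]
    simp

lemma momentFunctional_X_pow_succ_mul_self (h : HasTTRR P a b)
    (hv : ∀ n, momentFunctional v (P (n + 1)) = 0) (n : ℕ) :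
    momentFunctional v (X ^ (n + 1) * P (n + 1)) =
      a (n + 1) * momentFunctional v (X ^ n * P n) := by
  rw [h.momentFunctional_X_pow_succ_mul, h.momentFunctional_X_pow_mul_eq_zero hv (by lia),
    h.momentFunctional_X_pow_mul_eq_zero hv n.lt_succ_self]
  ring

theorem isSMOP (h : HasTTRR P a b) (ha : ∀ n, a (n + 1) ≠ 0) (hv0 : v 0 ≠ 0)
    (hv : ∀ n, momentFunctional v (P (n + 1)) = 0) : IsSMOP v P := by
  have hmonic := h.isMonicOfDegree
  have hmul {m n : ℕ} (hmn : m ≤ n) : momentFunctional v (P m * P n) =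
      (P m).coeff n * momentFunctional v (X ^ n * P n) :=
    momentFunctional_mul_of_natDegree_le (fun i => h.momentFunctional_X_pow_mul_eq_zero hv)
      ((hmonic m).natDegree_eq.trans_le hmn)
  have horth {m n : ℕ} (hmn : m < n) : momentFunctional v (P m * P n) = 0 := by
    rw [hmul hmn.le, coeff_eq_zero_of_natDegree_lt ((hmonic m).natDegree_eq.trans_lt hmn),
      zero_mul]
  have hnorm (n : ℕ) : momentFunctional v (X ^ n * P n) ≠ 0 := by
    induction n with
    | zero => simpa [h.1, momentFunctional_one] using hv0
    | succ n ih =>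
      rw [h.momentFunctional_X_pow_succ_mul_self hv]
      exact mul_ne_zero (ha n) ih
  refine ⟨fun n => (hmonic n).monic, fun n => (hmonic n).natDegree_eq, fun n m hnm => ?_,
    fun n => ?_⟩
  · rw [fapply_eq_momentFunctional]
    rcases hnm.lt_or_gt with hlt | hlt
    · exact horth hlt
    · rw [mul_comm, horth hlt]
  · rw [fapply_eq_momentFunctional, hmul le_rfl, ((isMonicOfDegree_iff _ _).1 (hmonic n)).2,
      one_mul]
    exact hnorm n

lemma coeff_ne_zero (h : HasTTRR P a b) (hP : IsSMOP v P) (n : ℕ) : a (n + 1) ≠ 0 := by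
  have hnorm := hP.momentFunctional_X_pow_mul_ne_zero (n + 1)
  rw [h.momentFunctional_X_pow_succ_mul_self hP.momentFunctional_succ] at hnorm
  exact left_ne_zero_of_mul hnorm

lemma moment_one (h : HasTTRR P a b) (hv : momentFunctional v (P 1) = 0) : v 1 = b 0 * v 0 := by
  rw [h.apply_one, map_sub, sub_eq_zero] at hv
  simpa [← momentFunctional_X_pow v 1, ← momentFunctional_one v, ← momentFunctional_C_mul] using hv

end Favard

end HasTTRR

lemma sq_X_sub_C_dvd_iff {R : Type*} [CommRing R] {p : R[X]} {c : R} :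
    (X - C c) ^ 2 ∣ p ↔ p.eval c = 0 ∧ (derivative p).eval c = 0 := by
  rw [X_sub_C_pow_dvd_iff, ← taylor_apply, X_pow_dvd_iff, ← taylor_coeff_zero, ← taylor_coeff_one]
  exact ⟨fun h => ⟨h 0 two_pos, h 1 one_lt_two⟩, fun h d hd => by interval_cases d <;> tauto⟩

lemma eq_zero_of_sq_dvd_of_Wr_ne_zero {p q r : ℂ[X]} {c s t : ℂ} (hW : Wr p q c ≠ 0)
    (hr : r = C s * p + C t * q) (hdvd : (X - C c) ^ 2 ∣ r) : r = 0 := by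
  obtain ⟨h0, h1⟩ := sq_X_sub_C_dvd_iff.1 hdvd
  simp only [hr, derivative_add, derivative_C_mul, eval_add, eval_mul, eval_C] at h0 h1
  have hs : s * Wr p q c = 0 := by
    unfold Wr
    linear_combination (derivative q).eval c * h0 - q.eval c * h1
  have ht : t * Wr p q c = 0 := by
    unfold Wr
    linear_combination p.eval c * h1 - (derivative p).eval c * h0
  rw [hr, (mul_eq_zero_iff_right hW).1 hs, (mul_eq_zero_iff_right hW).1 ht]
  simp

section Christoffel

/-- The coefficient of `P (n + 1)` in `christoffel P c n`. -/
def christoffelCoeffOne (P : ℕ → ℂ[X]) (c : ℂ) (n : ℕ) : ℂ :=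
  -Wr (P (n + 2)) (P n) c / Wr (P (n + 1)) (P n) c

/-- The coefficient of `P n` in `christoffel P c n`. -/
def christoffelCoeffZero (P : ℕ → ℂ[X]) (c : ℂ) (n : ℕ) : ℂ :=
  Wr (P (n + 2)) (P (n + 1)) c / Wr (P (n + 1)) (P n) c

/-- The combination of `P (n + 2)`, `P (n + 1)` and `P n`, monic in `P (n + 2)`, with a double zero
at `c`. If `P` is orthogonal with respect to `u`, then its quotient by `(x - c)²` is orthogonal
with respect to the Christoffel transform `(x - c)² u`. -/
def christoffel (P : ℕ → ℂ[X]) (c : ℂ) (n : ℕ) : ℂ[X] :=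
  P (n + 2) + C (christoffelCoeffOne P c n) * P (n + 1) + C (christoffelCoeffZero P c n) * P n

variable {P : ℕ → ℂ[X]} {a b : ℕ → ℂ} {c : ℂ}

lemma sq_dvd_christoffel {n : ℕ} (hW : Wr (P (n + 1)) (P n) c ≠ 0) :
    (X - C c) ^ 2 ∣ christoffel P c n := by
  rw [sq_X_sub_C_dvd_iff]
  simp only [christoffel, christoffelCoeffOne, christoffelCoeffZero, derivative_add,
    derivative_C_mul, eval_add, eval_mul, eval_C]
  constructor
  all_goals
    field_simp
    unfold Wr
    ring

lemma HasTTRR.X_mul_christoffel_zero (h : HasTTRR P a b) (hW : ∀ n, Wr (P (n + 1)) (P n) c ≠ 0) :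
    X * christoffel P c 0 = christoffel P c 1 +
      C (b 2 + christoffelCoeffOne P c 0 - christoffelCoeffOne P c 1) * christoffel P c 0 := by
  set α := christoffelCoeffOne P c with hα
  set β := christoffelCoeffZero P c with hβ
  set q := christoffel P c with hq
  set B := b 2 + α 0 - α 1 with hB
  have hcomb : X * q 0 - (q 1 + C B * q 0) =
      C (a 2 + α 0 * b 1 + β 0 - β 1 - B * α 0) * P 1 +
        C (α 0 * a 1 + β 0 * b 0 - B * β 0) * P 0 := by
    have h3 : P 3 = (X - C (b 2)) * P 2 - C (a 2) * P 1 := h.apply_add_two 1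
    have h2 : P 2 = (X - C (b 1)) * P 1 - C (a 1) * P 0 := h.apply_add_two 0
    simp only [hq, christoffel, ← hα, ← hβ, hB, zero_add, Nat.reduceAdd, C_add, C_sub, C_mul]
    linear_combination -h3 - C (α 0) * h2 + C (β 0) * h.2.1
  have hdvd (m : ℕ) : (X - C c) ^ 2 ∣ q m := sq_dvd_christoffel (hW m)
  exact sub_eq_zero.1 <| eq_zero_of_sq_dvd_of_Wr_ne_zero (hW 0) hcomb <|
    ((hdvd 0).mul_left X).sub ((hdvd 1).add ((hdvd 0).mul_left _))

lemma HasTTRR.X_mul_christoffel_succ (h : HasTTRR P a b) (hW : ∀ n, Wr (P (n + 1)) (P n) c ≠ 0)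
    (n : ℕ) :
    X * christoffel P c (n + 1) = christoffel P c (n + 2) +
      C (b (n + 3) + christoffelCoeffOne P c (n + 1) - christoffelCoeffOne P c (n + 2)) *
        christoffel P c (n + 1) +
      C (a (n + 1) * christoffelCoeffZero P c (n + 1) / christoffelCoeffZero P c n) *
        christoffel P c n := by
  set α := christoffelCoeffOne P c with hα
  set β := christoffelCoeffZero P c with hβ
  set q := christoffel P c with hq
  set B := b (n + 3) + α (n + 1) - α (n + 2) with hB
  set A := a (n + 1) * β (n + 1) / β n
  have hcomb : X * q (n + 1) - (q (n + 2) + C B * q (n + 1) + C A * q n) =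
      C (a (n + 3) + α (n + 1) * b (n + 2) + β (n + 1) - β (n + 2) - B * α (n + 1) - A) *
          P (n + 2) +
        C (α (n + 1) * a (n + 2) + β (n + 1) * b (n + 1) - B * β (n + 1) - A * α n) *
          P (n + 1) := by
    have hβn : β n ≠ 0 := div_ne_zero (hW _) (hW _)
    have hA : C A * C (β n) = C (a (n + 1)) * C (β (n + 1)) := by
      rw [← C_mul, ← C_mul, div_mul_cancel₀ _ hβn]
    have h4 : P (n + 4) = (X - C (b (n + 3))) * P (n + 3) - C (a (n + 3)) * P (n + 2) :=
      h.apply_add_two (n + 2)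
    have h3 : P (n + 3) = (X - C (b (n + 2))) * P (n + 2) - C (a (n + 2)) * P (n + 1) :=
      h.apply_add_two (n + 1)
    have h2 := h.apply_add_two n
    simp only [hq, christoffel, ← hα, ← hβ, hB, add_assoc, Nat.reduceAdd, C_add, C_sub, C_mul]
    linear_combination -h4 - C (α (n + 1)) * h3 - C (β (n + 1)) * h2 - P n * hA
  have hdvd (m : ℕ) : (X - C c) ^ 2 ∣ q m := sq_dvd_christoffel (hW m)
  exact sub_eq_zero.1 <| eq_zero_of_sq_dvd_of_Wr_ne_zero (hW (n + 1)) hcomb <|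
    ((hdvd (n + 1)).mul_left X).sub
      (((hdvd (n + 2)).add ((hdvd (n + 1)).mul_left _)).add ((hdvd n).mul_left _))

lemma HasTTRR.Wr_one_zero (h : HasTTRR P a b) : Wr (P 1) (P 0) c = -1 := by
  simp [Wr, h.1, h.apply_one]

lemma HasTTRR.christoffelCoeffZero_zero (h : HasTTRR P a b) :
    christoffelCoeffZero P c 0 = (c - b 0) ^ 2 + a 1 := by
  have h2 : P 2 = (X - C (b 1)) * P 1 - C (a 1) * P 0 := h.apply_add_two 0
  simp only [christoffelCoeffZero, zero_add, h.Wr_one_zero]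
  simp only [Wr, h2, h.apply_one, h.1, mul_one, eval_sub, eval_mul, eval_X, eval_C, derivative_sub,
    derivative_mul, derivative_X, derivative_C, sub_zero, eval_one, one_mul, eval_add]
  ring

lemma HasTTRR.christoffel_zero (h : HasTTRR P a b) (hW : Wr (P 1) (P 0) c ≠ 0) :
    christoffel P c 0 = (X - C c) ^ 2 := by
  have hmonic : IsMonicOfDegree (christoffel P c 0) 2 := by
    refine ((h.isMonicOfDegree 2).add_right ?_).add_right ?_
    all_goals
      grw [natDegree_C_mul_le]
      simp [(h.isMonicOfDegree _).natDegree_eq]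
  refine eq_of_monic_of_dvd_of_natDegree_le ((monic_X_sub_C c).pow 2) hmonic.monic
    (sq_dvd_christoffel hW) ?_
  simp [hmonic.natDegree_eq]

variable {u : ℕ → ℂ}

lemma momentFunctional_christoffel_zero (hP0 : P 0 = 1)
    (hu : ∀ n, momentFunctional u (P (n + 1)) = 0) :
    momentFunctional u (christoffel P c 0) = christoffelCoeffZero P c 0 * u 0 := by
  simp only [christoffel, map_add, momentFunctional_C_mul, hu, hP0, momentFunctional_one, mul_zero,
    zero_add]

lemma momentFunctional_christoffel_succ (hu : ∀ n, momentFunctional u (P (n + 1)) = 0) (n : ℕ) :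
    momentFunctional u (christoffel P c (n + 1)) = 0 := by
  simp [christoffel, momentFunctional_C_mul, hu]

end Christoffel

section Inverse

/-- The sequence `1, u₀⁻¹ p₀, u₀⁻¹ p₁, …`, where `pₙ` is the divided difference of
`christoffel P 0 n`; under the hypotheses of `isSMOP_inversePoly` it is the SMOP of `u⁻¹`. -/
def inversePoly (u : ℕ → ℂ) (P : ℕ → ℂ[X]) : ℕ → ℂ[X]
  | 0 => 1
  | n + 1 => C (u 0)⁻¹ * associatedPoly u (christoffel P 0 n)

variable {u v : ℕ → ℂ} {P : ℕ → ℂ[X]} {a b a' b' : ℕ → ℂ}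

lemma momentFunctional_inversePoly_succ (huv : IsInverseMoments u v)
    (hW : ∀ n, Wr (P (n + 1)) (P n) 0 ≠ 0) (n : ℕ) :
    momentFunctional v (inversePoly u P (n + 1)) = 0 := by
  have hdvd : X ^ 2 ∣ christoffel P 0 n := by simpa using sq_dvd_christoffel (hW n)
  rw [inversePoly, momentFunctional_C_mul, momentFunctional_associatedPoly huv,
    X_pow_dvd_iff.1 hdvd 1 one_lt_two, mul_zero]

lemma HasTTRR.inversePoly_one (h : HasTTRR P a b) (hu0 : u 0 ≠ 0)
    (hu : momentFunctional u (P 1) = 0) : inversePoly u P 1 = X + C (b 0) := by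
  have hW : Wr (P 1) (P 0) 0 ≠ 0 := by simp [h.Wr_one_zero]
  have hassoc : associatedPoly u (christoffel P 0 0) = C (u 0) * (X + C (b 0)) := by
    rw [h.christoffel_zero hW, C_0, sub_zero, associatedPoly_X_pow]
    simp only [Nat.add_one_sub_one, Finset.sum_range_succ, Finset.range_one, Finset.sum_singleton,
      tsub_zero, pow_one, h.moment_one hu, map_mul, tsub_self, pow_zero, mul_one]
    ring
  rw [inversePoly, hassoc, ← mul_assoc, ← C_mul, inv_mul_cancel₀ hu0, C_1, one_mul]

lemma hasTTRR_inversePoly (h : HasTTRR P a b) (hW : ∀ n, Wr (P (n + 1)) (P n) 0 ≠ 0)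
    (hu0 : u 0 ≠ 0) (hu : ∀ n, momentFunctional u (P (n + 1)) = 0) (hb0 : b' 0 = -b 0)
    (hb : ∀ n, b' (n + 1) =
      b (n + 2) + christoffelCoeffOne P 0 n - christoffelCoeffOne P 0 (n + 1))
    (ha1 : a' 1 = -christoffelCoeffZero P 0 0)
    (ha : ∀ n, a' (n + 2) =
      a (n + 1) * christoffelCoeffZero P 0 (n + 1) / christoffelCoeffZero P 0 n) :
    HasTTRR (inversePoly u P) a' b' := by
  refine ⟨rfl, ?_, fun n hn => ?_⟩
  · rw [h.inversePoly_one hu0 (hu 0), inversePoly, hb0, C_neg]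
    ring
  obtain ⟨n, rfl⟩ := Nat.exists_eq_add_of_le' hn
  rw [add_tsub_cancel_right, hb]
  cases n with
  | zero =>
    have hrec := congrArg (C (u 0)⁻¹ * associatedPoly u ·) (h.X_mul_christoffel_zero hW)
    have hu0C : C (u 0)⁻¹ * C (u 0) = 1 := by rw [← C_mul, inv_mul_cancel₀ hu0, C_1]
    simp only [associatedPoly_X_mul, momentFunctional_christoffel_zero h.1 hu, map_add,
      associatedPoly_C_mul, C_mul] at hrec
    simp only [inversePoly, ha1, map_neg, zero_add]
    linear_combination hrec - C (christoffelCoeffZero P 0 0) * hu0C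
  | succ n =>
    have hrec := congrArg (C (u 0)⁻¹ * associatedPoly u ·) (h.X_mul_christoffel_succ hW n)
    simp only [associatedPoly_X_mul, momentFunctional_christoffel_succ hu, map_add,
      associatedPoly_C_mul, C_0] at hrec
    simp only [inversePoly, ha]
    linear_combination hrec

lemma isSMOP_inversePoly (hP : IsSMOP u P) (h : HasTTRR P a b) (huv : IsInverseMoments u v)
    (hW : ∀ n, Wr (P (n + 1)) (P n) 0 ≠ 0) (hT : HasTTRR (inversePoly u P) a' b')
    (ha1 : a' 1 = -christoffelCoeffZero P 0 0)
    (ha : ∀ n, a' (n + 2) =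
      a (n + 1) * christoffelCoeffZero P 0 (n + 1) / christoffelCoeffZero P 0 n) :
    IsSMOP v (inversePoly u P) := by
  have hβ (n : ℕ) : christoffelCoeffZero P 0 n ≠ 0 := div_ne_zero (hW _) (hW _)
  have ha' : ∀ n, a' (n + 1) ≠ 0
    | 0 => by simpa [ha1] using hβ 0
    | n + 1 => by
      rw [ha]
      exact div_ne_zero (mul_ne_zero (h.coeff_ne_zero hP n) (hβ _)) (hβ _)
  exact hT.isSMOP ha' (right_ne_zero_of_mul_eq_one huv.moment_zero_mul)
    (momentFunctional_inversePoly_succ huv hW)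

end Inverse

theorem stmt_7_general (u : ℕ → ℂ) (P : ℕ → Polynomial ℂ) (hP : IsSMOP u P)
    (a b : ℕ → ℂ) (hrec : HasTTRR P a b)
    (hW : ∀ n, 2 ≤ n → Wr (P n) (P (n - 1)) 0 ≠ 0)
    (uinv : ℕ → ℂ) (hinv : IsInverseMoments u uinv)
    (am bm : ℕ → ℂ)
    (hbm0 : bm 0 = -b 0)
    (hbm : ∀ n, 1 ≤ n → bm n = b (n + 1)
      - Wr (P (n + 1)) (P (n - 1)) 0 / Wr (P n) (P (n - 1)) 0
      + Wr (P (n + 2)) (P n) 0 / Wr (P (n + 1)) (P n) 0)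
    (ham1 : am 1 = -(b 0 ^ 2 + a 1))
    (ham : ∀ n, 2 ≤ n → am n = a (n - 1)
      * (Wr (P (n + 1)) (P n) 0 * Wr (P (n - 1)) (P (n - 2)) 0)
      / (Wr (P n) (P (n - 1)) 0) ^ 2) :
    ∃ Pm, IsSMOP uinv Pm ∧ HasTTRR Pm am bm := by
  have hWsucc : ∀ n, Wr (P (n + 1)) (P n) 0 ≠ 0
    | 0 => by simp [hrec.Wr_one_zero]
    | n + 1 => hW (n + 2) (by lia)
  have ham1' : am 1 = -christoffelCoeffZero P 0 0 := by
    rw [ham1, hrec.christoffelCoeffZero_zero, zero_sub, neg_sq]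
  have ham' (n : ℕ) : am (n + 2) =
      a (n + 1) * christoffelCoeffZero P 0 (n + 1) / christoffelCoeffZero P 0 n := by
    rw [ham (n + 2) (by lia)]
    simp only [christoffelCoeffZero, Nat.add_sub_cancel, Nat.add_succ_sub_one]
    field_simp [hWsucc]
  have hbm' (n : ℕ) : bm (n + 1) =
      b (n + 2) + christoffelCoeffOne P 0 n - christoffelCoeffOne P 0 (n + 1) := by
    rw [hbm (n + 1) (by lia)]
    simp only [christoffelCoeffOne, Nat.add_sub_cancel]
    ring
  have hu0 : u 0 ≠ 0 := left_ne_zero_of_mul_eq_one hinv.moment_zero_mul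
  have hT : HasTTRR (inversePoly u P) am bm :=
    hasTTRR_inversePoly hrec hWsucc hu0 hP.momentFunctional_succ hbm0 hbm' ham1' ham'
  exact ⟨inversePoly u P, isSMOP_inversePoly hP hrec hinv hWsucc hT ham1' ham', hT⟩

/-- three term recurrence coefficients of the SMOP `(P⁻_n)` of the inverse
functional `u⁻¹`. -/
theorem stmt_7 (u : ℕ → ℂ) (P : ℕ → Polynomial ℂ) (hP : IsSMOP u P)
    (a b : ℕ → ℂ) (hrec : HasTTRR P a b) (ha : ∀ n, 1 ≤ n → a n ≠ 0) (hu0 : u 0 ≠ 0)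
    (hb : b 1 + b 0 ≠ 0) (hW : ∀ n, 2 ≤ n → Wr (P n) (P (n - 1)) 0 ≠ 0)
    (uinv : ℕ → ℂ) (hinv : IsInverseMoments u uinv)
    (Pm : ℕ → Polynomial ℂ) (hPm : IsSMOP uinv Pm)
    (am bm : ℕ → ℂ)
    (hbm0 : bm 0 = -b 0)
    (hbm : ∀ n, 1 ≤ n → bm n = b (n + 1)
      - Wr (P (n + 1)) (P (n - 1)) 0 / Wr (P n) (P (n - 1)) 0
      + Wr (P (n + 2)) (P n) 0 / Wr (P (n + 1)) (P n) 0)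
    (ham1 : am 1 = -(b 0 ^ 2 + a 1))
    (ham : ∀ n, 2 ≤ n → am n = a (n - 1)
      * (Wr (P (n + 1)) (P n) 0 * Wr (P (n - 1)) (P (n - 2)) 0)
      / (Wr (P n) (P (n - 1)) 0) ^ 2) :
    HasTTRR Pm am bm := by
  obtain ⟨Q, hQ, hT⟩ := stmt_7_general u P hP a b hrec hW uinv hinv am bm hbm0 hbm ham1 ham
  exact hPm.unique hQ ▸ hT
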